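/- arXiv:2311.06387 — 2 statements merged into one kernel-verified Lean document; each statement's English description precedes it below -/
import Mathlib

section
/- Let P ⊆ Φ_{B_n} be a signed poset. Call a pair a ⋖ b of elements of ±[n] ∪ {0} a covering pair of the Fischer order if a < b and there is no c ∈ ±[n] ∪ {0} with a < c < b, and call v(a) − v(b) the corresponding covering root; every covering root lies in P. Then every element of P is a sum with nonnegative integer coefficients of covering roots; consequently the additive submonoid of ℤ^n generated by P coincides with the additive submonoid generated by the covering roots. Moreover this generating set is minimal: no covering root is a sum with nonnegative integer coefficients of the other covering roots. -/
open scoped Classical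

noncomputable section

/-- Signed index set `±[n]`: `(true, i)` represents `+i`, `(false, i)` represents `-i`. -/
abbrev SIdx (n : ℕ) := Bool × Fin n

/-- Negation `a ↦ -a` on `±[n]`. -/
def negS {n : ℕ} (a : SIdx n) : SIdx n := (!a.1, a.2)

/-- Standard basis vector `e_i` of `ℝ^n`. -/
def stdB (n : ℕ) (i : Fin n) : Fin n → ℝ := Pi.single i 1

/-- `rsgn true = 1`, `rsgn false = -1`. -/
def rsgn (s : Bool) : ℝ := if s then 1 else -1

/-- `v(a)` for `a ∈ ±[n]`: `v(+i) = e_i`, `v(-i) = -e_i`. -/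
def vS {n : ℕ} (a : SIdx n) : Fin n → ℝ := rsgn a.1 • stdB n a.2

/-- `v` on `±[n] ∪ {0}` (with `none` playing the role of `0`). -/
def vO {n : ℕ} : Option (SIdx n) → (Fin n → ℝ)
  | none => 0
  | some a => vS a

/-- Negation on `±[n] ∪ {0}`, fixing `0`. -/
def negO {n : ℕ} : Option (SIdx n) → Option (SIdx n)
  | none => none
  | some a => some (negS a)

/-- Standard inner product on `ℝ^n`. -/
def dotR {n : ℕ} (x y : Fin n → ℝ) : ℝ := ∑ i, x i * y i

/-- The type `B_n` root system `Φ_{B_n}`. -/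
def BnRoots (n : ℕ) : Set (Fin n → ℝ) :=
  {α | (∃ i j : Fin n, i < j ∧ ∃ s t : Bool, α = rsgn s • stdB n i + rsgn t • stdB n j) ∨
    ∃ i : Fin n, ∃ s : Bool, α = rsgn s • stdB n i}

/-- The positive roots `Φ⁺_{B_n}`. -/
def BnPos (n : ℕ) : Set (Fin n → ℝ) :=
  {α | (∃ i j : Fin n, i < j ∧ ∃ t : Bool, α = stdB n i + rsgn t • stdB n j) ∨
    ∃ i : Fin n, α = stdB n i}

/-- The type `C_n` root system `Φ_{C_n}`. -/
def CnRoots (n : ℕ) : Set (Fin n → ℝ) :=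
  {α | (∃ i j : Fin n, i < j ∧ ∃ s t : Bool, α = rsgn s • stdB n i + rsgn t • stdB n j) ∨
    ∃ i : Fin n, ∃ s : Bool, α = (2 * rsgn s) • stdB n i}

/-- Nonnegative real linear combinations of elements of `S`. -/
def nnSpan {n : ℕ} (S : Set (Fin n → ℝ)) : Set (Fin n → ℝ) :=
  {x | ∃ (r : ℕ) (c : Fin r → ℝ) (β : Fin r → (Fin n → ℝ)),
    (∀ m, 0 ≤ c m) ∧ (∀ m, β m ∈ S) ∧ x = ∑ m, c m • β m}

/-- A signed poset: a subset of `Φ_{B_n}`, antisymmetric and closed under positive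
linear combinations remaining in `Φ_{B_n}`. -/
def IsSignedPoset (n : ℕ) (P : Set (Fin n → ℝ)) : Prop :=
  P ⊆ BnRoots n ∧ (∀ α ∈ P, -α ∉ P) ∧ ∀ α ∈ BnRoots n, α ∈ nnSpan P → α ∈ P

/-- A `C_n`-signed poset. -/
def IsCnSignedPoset (n : ℕ) (Q : Set (Fin n → ℝ)) : Prop :=
  Q ⊆ CnRoots n ∧ (∀ α ∈ Q, -α ∉ Q) ∧ ∀ α ∈ CnRoots n, α ∈ nnSpan Q → α ∈ Q

/-- The root cone `K^rt_P`. -/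
def rootCone {n : ℕ} (P : Set (Fin n → ℝ)) : Set (Fin n → ℝ) := nnSpan P

/-- The weight cone `K^wt_P`. -/
def weightCone {n : ℕ} (P : Set (Fin n → ℝ)) : Set (Fin n → ℝ) :=
  {f | ∀ α ∈ P, 0 ≤ dotR f α}

/-- The Fischer (strict) order on `±[n] ∪ {0}`:
`a < b` iff `v(a) - v(b) ∈ P`, or (`b = -a ≠ 0` and `v(a) ∈ P`). -/
def fLT {n : ℕ} (P : Set (Fin n → ℝ)) (a b : Option (SIdx n)) : Prop :=
  vO a - vO b ∈ P ∨ (a ≠ none ∧ b = negO a ∧ vO a ∈ P)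

/-- A subset of `±[n]` is isotropic if it contains no pair `{i, -i}`. -/
def Isotropic {n : ℕ} (J : Finset (SIdx n)) : Prop :=
  ∀ i : Fin n, ¬((true, i) ∈ J ∧ (false, i) ∈ J)

/-- Signed characteristic vector of a subset of `±[n]`. -/
def chiF {n : ℕ} (J : Finset (SIdx n)) : Fin n → ℝ := fun i =>
  if (true, i) ∈ J then 1 else if (false, i) ∈ J then -1 else 0

/-- `J` is an ideal of the signed poset `P`. -/
def IsIdeal {n : ℕ} (P : Set (Fin n → ℝ)) (J : Finset (SIdx n)) : Prop :=
  Isotropic J ∧ ∀ α ∈ P, 0 ≤ dotR (chiF J) α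

/-- Comparability in the Fischer order of `P`. -/
def fComp {n : ℕ} (P : Set (Fin n → ℝ)) (a b : SIdx n) : Prop :=
  fLT P (some a) (some b) ∨ fLT P (some b) (some a)

/-- One step in the comparability graph on a subset `J` of `±[n]`. -/
def connStep {n : ℕ} (P : Set (Fin n → ℝ)) (J : Finset (SIdx n)) (a b : SIdx n) : Prop :=
  a ∈ J ∧ b ∈ J ∧ fComp P a b

/-- `J` is connected: nonempty, and any two of its elements are joined by a path inside `J`
in the comparability graph of the Fischer order of `P`. -/
def IsConnectedIdl {n : ℕ} (P : Set (Fin n → ℝ)) (J : Finset (SIdx n)) : Prop :=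
  J.Nonempty ∧ ∀ a ∈ J, ∀ b ∈ J, Relation.ReflTransGen (connStep P J) a b

/-- A connected ideal of `P`. -/
def IsConnIdeal {n : ℕ} (P : Set (Fin n → ℝ)) (J : Finset (SIdx n)) : Prop :=
  IsIdeal P J ∧ IsConnectedIdl P J

/-- Support `supp J = {|a| : a ∈ J}`. -/
def suppF {n : ℕ} (J : Finset (SIdx n)) : Finset (Fin n) := J.image Prod.snd

/-- `J` and `K` intersect nontrivially. -/
def NontrivInter {n : ℕ} (J K : Finset (SIdx n)) : Prop :=
  (suppF J ∩ suppF K).Nonempty ∧ ¬J ⊆ K ∧ ¬K ⊆ J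

/-- `J` and `K` intersect trivially. -/
def TrivInter {n : ℕ} (J K : Finset (SIdx n)) : Prop := ¬NontrivInter J K

/-- A signed permutation, as an anti-symmetric bijection of `±[n]`. -/
def IsSPerm {n : ℕ} (w : SIdx n ≃ SIdx n) : Prop := ∀ a, w (negS a) = negS (w a)

/-- Linear action of a signed permutation on `ℝ^n`, determined by `w(e_i) = v(w(+i))`. -/
def spAct {n : ℕ} (w : SIdx n ≃ SIdx n) (x : Fin n → ℝ) : Fin n → ℝ :=
  ∑ i, x i • vS (w (true, i))

/-- `w` is a linear extension of `P`: a signed permutation with `P ⊆ w(Φ⁺_{B_n})`. -/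
def IsLinExt {n : ℕ} (P : Set (Fin n → ℝ)) (w : SIdx n ≃ SIdx n) : Prop :=
  IsSPerm w ∧ ∀ α ∈ P, ∃ β ∈ BnPos n, α = spAct w β

/-- The (finite) set `𝓛(P)` of linear extensions of `P`. -/
def linExts (n : ℕ) (P : Set (Fin n → ℝ)) : Finset (SIdx n ≃ SIdx n) :=
  Finset.univ.filter (IsLinExt P)

/-- Simple roots of `Φ_{B_n}`: `α_i = e_i - e_{i+1}` for `i < n - 1`, `α_{n-1} = e_{n-1}`
(0-indexed). -/
def simpleRoot (n : ℕ) (i : Fin n) : Fin n → ℝ := fun j =>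
  (if j = i then (1 : ℝ) else 0) - if (j : ℕ) = (i : ℕ) + 1 then 1 else 0

/-- `J^w_m = {w(1), …, w(m)}` (0-indexed: the images under `w` of `+1, …, +(m+1)`). -/
def JwSet {n : ℕ} (w : SIdx n ≃ SIdx n) (m : Fin n) : Finset (SIdx n) :=
  (Finset.univ.filter (fun j : Fin n => j ≤ m)).image (fun j => w (true, j))

/-- An extensible ideal of `P`. -/
def Extensible (n : ℕ) (P : Set (Fin n → ℝ)) (J : Finset (SIdx n)) : Prop :=
  ∃ I : Finset (SIdx n), I.Nonempty ∧ Disjoint I J ∧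
    IsIdeal P (J ∪ I) ∧ IsIdeal P (J ∪ I.image negS)

/-- The finite set `J_conn(P)` of connected ideals of `P`. -/
def JconnF (n : ℕ) (P : Set (Fin n → ℝ)) : Finset (Finset (SIdx n)) :=
  Finset.univ.filter (IsConnIdeal P)

/-- Membership in `Π(P)`: an unordered pair of nontrivially intersecting connected ideals. -/
def inPiP {n : ℕ} (P : Set (Fin n → ℝ)) (p : Sym2 (Finset (SIdx n))) : Prop :=
  ∃ J K : Finset (SIdx n),
    p = s(J, K) ∧ IsConnIdeal P J ∧ IsConnIdeal P K ∧ NontrivInter J K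

/-- The finite set `Π(P)` of unordered pairs of nontrivially intersecting connected ideals. -/
def PiP (n : ℕ) (P : Set (Fin n → ℝ)) : Finset (Sym2 (Finset (SIdx n))) :=
  Finset.univ.filter (inPiP P)

/-- No connected ideal of `P` intersects two or more other connected ideals nontrivially. -/
def NoDoubleNontriv (n : ℕ) (P : Set (Fin n → ℝ)) : Prop :=
  ∀ J K K' : Finset (SIdx n), IsConnIdeal P J → IsConnIdeal P K → IsConnIdeal P K' →
    NontrivInter J K → NontrivInter J K' → K = K'

/-- The connected component of `a` inside `J` (w.r.t. the Fischer comparability graph). -/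
def componentIn {n : ℕ} (P : Set (Fin n → ℝ)) (J : Finset (SIdx n)) (a : SIdx n) :
    Finset (SIdx n) :=
  J.filter (fun b => Relation.ReflTransGen (connStep P J) a b)

/-- The set of connected components of `J`. -/
def componentsOf {n : ℕ} (P : Set (Fin n → ℝ)) (J : Finset (SIdx n)) :
    Finset (Finset (SIdx n)) :=
  J.image (componentIn P J)

/-- The signed support `supp±(f) = {sgn(f_i)·i : f_i ≠ 0}` of a vector `f ∈ ℝ^n`. -/
def suppPM {n : ℕ} (f : Fin n → ℝ) : Finset (SIdx n) :=
  Finset.univ.filter (fun a : SIdx n => if a.1 then 0 < f a.2 else f a.2 < 0)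

/-- Index type for the variables `U_J`, `J` a connected ideal of `P`. -/
abbrev ConnIdx (n : ℕ) (P : Set (Fin n → ℝ)) := {J : Finset (SIdx n) // IsConnIdeal P J}

/-- Integer signed characteristic vector, as an exponent vector for Laurent monomials. -/
def chiZ {n : ℕ} (J : Finset (SIdx n)) : Fin n →₀ ℤ :=
  Finsupp.equivFunOnFinite.symm (fun i =>
    if (true, i) ∈ J then 1 else if (false, i) ∈ J then -1 else 0)

/-- The map `φ : k[U_J : J ∈ J_conn(P)] → k[x_1^{±1}, …, x_n^{±1}]`, `U_J ↦ x^{χ_J}`. -/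
def phiWt (n : ℕ) (P : Set (Fin n → ℝ)) (k : Type) [Field k] :
    MvPolynomial (ConnIdx n P) k →ₐ[k] AddMonoidAlgebra k (Fin n →₀ ℤ) :=
  MvPolynomial.aeval (fun J => AddMonoidAlgebra.single (chiZ J.val) 1)

/-- The binomial `syz(U_J, U_K) = U_J U_K - (∏_A U_A) (∏_B U_B)`, where `A` runs over the
connected components of `J ∩ K` and `B` over the connected components of `supp±(χ_J + χ_K)`. -/
def syzPoly (n : ℕ) (P : Set (Fin n → ℝ)) (k : Type) [Field k] (J K : ConnIdx n P) :
    MvPolynomial (ConnIdx n P) k :=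
  MvPolynomial.X J * MvPolynomial.X K -
    (∏ A ∈ Finset.univ.filter
        (fun A : ConnIdx n P => (A : Finset (SIdx n)) ∈ componentsOf P (J.val ∩ K.val)),
        MvPolynomial.X A) *
      ∏ B ∈ Finset.univ.filter
        (fun B : ConnIdx n P =>
          (B : Finset (SIdx n)) ∈ componentsOf P (suppPM (chiF J.val + chiF K.val))),
        MvPolynomial.X B

/-- `θ_1, …, θ_r` is a regular sequence: the ideal it generates is proper, and each `θ_{m+1}`
is a non-zero-divisor modulo the ideal generated by `θ_1, …, θ_m`. -/
def IsRegSeq {R : Type} [CommRing R] {r : ℕ} (θ : Fin r → R) : Prop :=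
  Ideal.span (Set.range θ) ≠ ⊤ ∧
    ∀ (m : ℕ) (hm : m < r) (x : R),
      θ ⟨m, hm⟩ * x ∈ Ideal.span (θ '' {j : Fin r | (j : ℕ) < m}) →
        x ∈ Ideal.span (θ '' {j : Fin r | (j : ℕ) < m})

/-- The induced signed poset `P_A = P ∩ span_ℝ{e_i : i ∈ A}`. -/
def inducedPoset (n : ℕ) (P : Set (Fin n → ℝ)) (A : Finset (Fin n)) : Set (Fin n → ℝ) :=
  {α | α ∈ P ∧ α ∈ Submodule.span ℝ (stdB n '' (A : Set (Fin n)))}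

/-- The major index of a signed permutation. -/
def majB {n : ℕ} (w : SIdx n ≃ SIdx n) : ℕ :=
  ∑ i ∈ Finset.univ.filter
      (fun i : Fin n => spAct w (simpleRoot n i) ∉ BnPos n), ((i : ℕ) + 1)

/-- `[m]_q = 1 + q + ⋯ + q^{m-1}` in `ℤ[q]`. -/
def qInt (m : ℕ) : Polynomial ℤ := ∑ t ∈ Finset.range m, Polynomial.X ^ t

/-- The symmetric function `{J, K} ↦ ⟨x, χ_J + χ_K⟩` on unordered pairs. -/
def pairDot {n : ℕ} (x : Fin n → ℝ) : Sym2 (Finset (SIdx n)) → ℝ :=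
  Sym2.lift ⟨fun J K => dotR x (chiF J + chiF K),
    fun J K => congrArg (dotR x) (add_comm (chiF J) (chiF K))⟩

/-- The symmetric function `{J, K} ↦ [|J| + |K|]_q` on unordered pairs. -/
def pairQ {n : ℕ} : Sym2 (Finset (SIdx n)) → Polynomial ℤ :=
  Sym2.lift ⟨fun J K => qInt (J.card + K.card),
    fun J K => congrArg qInt (Nat.add_comm J.card K.card)⟩

/-- The principal order ideal `I_≤(a)` in the Fischer order restricted to `±[n]`. -/
def Ile {n : ℕ} (P : Set (Fin n → ℝ)) (a : SIdx n) : Set (SIdx n) :=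
  {b | b = a ∨ fLT P (some b) (some a)}

/-- A set of signed indices is isotropic if it contains no pair `{i, -i}`. -/
def IsoSet {n : ℕ} (S : Set (SIdx n)) : Prop :=
  ∀ i : Fin n, ¬((true, i) ∈ S ∧ (false, i) ∈ S)

/-- A covering pair of the Fischer order of `P`. -/
def CovPair {n : ℕ} (P : Set (Fin n → ℝ)) (a b : Option (SIdx n)) : Prop :=
  fLT P a b ∧ ¬∃ c : Option (SIdx n), fLT P a c ∧ fLT P c b

/-- The set of covering roots of `P`. -/
def covRoots {n : ℕ} (P : Set (Fin n → ℝ)) : Set (Fin n → ℝ) :=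
  {x | ∃ a b : Option (SIdx n), CovPair P a b ∧ x = vO a - vO b}

/-- The set `J_ε = {i : ε_i = 1} ∪ {-i : ε_i = -1}` attached to a `{-1,0,1}`-vector. -/
def Jeps {n : ℕ} (ε : Fin n → ℝ) : Set (SIdx n) :=
  {a | (a.1 = true ∧ ε a.2 = 1) ∨ (a.1 = false ∧ ε a.2 = -1)}

theorem nn_of_mem {n : ℕ} {S : Set (Fin n → ℝ)} {x : Fin n → ℝ} (h : x ∈ S) :
    x ∈ nnSpan S :=
  ⟨1, fun _ => 1, fun _ => x, fun _ => zero_le_one, fun _ => h, by simp⟩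

theorem nn_zero {n : ℕ} (S : Set (Fin n → ℝ)) : (0 : Fin n → ℝ) ∈ nnSpan S :=
  ⟨0, fun _ => 0, fun _ => 0, fun _ => le_rfl, fun m => m.elim0, by simp⟩

theorem nn_smul {n : ℕ} {S : Set (Fin n → ℝ)} {x : Fin n → ℝ} (t : ℝ) (ht : 0 ≤ t)
    (h : x ∈ nnSpan S) : t • x ∈ nnSpan S := by
  obtain ⟨r, c, β, hc, hβ, rfl⟩ := h
  exact ⟨r, fun m => t * c m, β, fun m => mul_nonneg ht (hc m), hβ, by
    simp [Finset.smul_sum, mul_smul]⟩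

theorem nn_add {n : ℕ} {S : Set (Fin n → ℝ)} {x y : Fin n → ℝ}
    (hx : x ∈ nnSpan S) (hy : y ∈ nnSpan S) : x + y ∈ nnSpan S := by
  obtain ⟨r, c, β, hc, hβ, rfl⟩ := hx
  obtain ⟨s, d, γ, hd, hγ, rfl⟩ := hy
  refine ⟨r + s, Fin.append c d, Fin.append β γ, ?_, ?_, ?_⟩
  · intro m
    refine Fin.addCases (fun i => ?_) (fun i => ?_) m <;> simp [hc, hd]
  · intro m
    refine Fin.addCases (fun i => ?_) (fun i => ?_) m <;> simp [hβ, hγ]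
  · simp [Fin.sum_univ_add]

theorem nn_closure {n : ℕ} {S T : Set (Fin n → ℝ)} (h : T ⊆ nnSpan S) {x : Fin n → ℝ}
    (hx : x ∈ AddSubmonoid.closure T) : x ∈ nnSpan S := by
  induction hx using AddSubmonoid.closure_induction with
  | mem x hx => exact h hx
  | zero => exact nn_zero S
  | add x y _ _ hx hy => exact nn_add hx hy

theorem rsgn_not (s : Bool) : rsgn (!s) = - rsgn s := by
  cases s <;> simp [rsgn]

theorem vO_neg {n : ℕ} (a : Option (SIdx n)) : vO (negO a) = - vO a := by
  rcases a with _ | ⟨s, i⟩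
  · simp [vO, negO]
  · simp [vO, negO, vS, negS, rsgn_not]

theorem negO_negO {n : ℕ} (a : Option (SIdx n)) : negO (negO a) = a := by
  rcases a with _ | ⟨s, i⟩ <;> simp [negO, negS]

theorem negO_ne {n : ℕ} (a : Option (SIdx n)) (h : a ≠ none) : negO a ≠ a := by
  rcases a with _ | ⟨s, i⟩
  · exact absurd rfl h
  · simp [negO, negS]

theorem vO_root {n : ℕ} (a : Option (SIdx n)) (h : a ≠ none) : vO a ∈ BnRoots n := by
  rcases a with _ | ⟨s, i⟩
  · exact absurd rfl h
  · exact Or.inr ⟨i, s, rfl⟩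

theorem sub_root {n : ℕ} (a b : Option (SIdx n)) (h : a ≠ b) (h' : b ≠ negO a) :
    vO a - vO b ∈ BnRoots n := by
  rcases a with _ | ⟨s, i⟩
  · have := vO_root (negO b) (by rcases b with _ | b <;> simp_all [negO])
    rw [vO_neg] at this
    simpa [vO] using this
  · rcases b with _ | ⟨t, j⟩
    · simpa [vO] using vO_root (some (s, i)) (by simp)
    · rcases lt_trichotomy i j with hij | hij | hij
      · exact Or.inl ⟨i, j, hij, s, !t, by simp [vO, vS, rsgn_not, sub_eq_add_neg]⟩
      · subst hij
        cases s <;> cases t <;> simp_all [negO, negS]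
      · exact Or.inl ⟨j, i, hij, !t, s, by
          simp [vO, vS, rsgn_not, sub_eq_add_neg, add_comm]⟩

theorem fLT_iff {n : ℕ} {P : Set (Fin n → ℝ)} (hP : IsSignedPoset n P)
    (a b : Option (SIdx n)) : fLT P a b ↔ a ≠ b ∧ vO a - vO b ∈ nnSpan P := by
  constructor
  · rintro (h | ⟨h1, rfl, h3⟩)
    · refine ⟨?_, nn_of_mem h⟩
      rintro rfl
      have := hP.2.1 _ h
      simp at this h
      exact this h
    · refine ⟨(negO_ne a h1).symm, ?_⟩
      rw [vO_neg, sub_neg_eq_add]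
      exact nn_add (nn_of_mem h3) (nn_of_mem h3)
  · rintro ⟨hne, h⟩
    by_cases hb : b = negO a
    · have ha : a ≠ none := by
        rintro rfl
        exact hne hb.symm
      refine Or.inr ⟨ha, hb, hP.2.2 _ (vO_root a ha) ?_⟩
      subst hb
      have := nn_smul (1 / 2) (by norm_num) h
      convert this using 1
      rw [vO_neg]
      module
    · exact Or.inl (hP.2.2 _ (sub_root a b hne hb) h)

theorem fLT_asymm {n : ℕ} {P : Set (Fin n → ℝ)} (hP : IsSignedPoset n P)
    {a b : Option (SIdx n)} (h : fLT P a b) (h' : fLT P b a) : False := by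
  have hne := ((fLT_iff hP a b).1 h).1
  rcases h with h | ⟨h1, rfl, h3⟩
  · rcases h' with h' | ⟨h1, rfl, h3⟩
    · exact hP.2.1 _ h (by simpa using h')
    · refine hP.2.1 _ h3 (hP.2.2 _ ?_ ?_)
      · rw [← vO_neg]
        exact vO_root _ (by rcases b with _ | b <;> simp_all [negO])
      · have := nn_smul (1 / 2) (by norm_num) (nn_of_mem h)
        convert this using 1
        rw [vO_neg]
        module
  · refine hP.2.1 _ h3 (hP.2.2 _ ?_ ?_)
    · rw [← vO_neg]
      exact vO_root _ (by rcases a with _ | a <;> simp_all [negO])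
    · have := nn_smul (1 / 2) (by norm_num) ((fLT_iff hP _ _).1 h').2
      convert this using 1
      rw [vO_neg]
      module

theorem fLT_trans {n : ℕ} {P : Set (Fin n → ℝ)} (hP : IsSignedPoset n P)
    {a b c : Option (SIdx n)} (h : fLT P a b) (h' : fLT P b c) : fLT P a c := by
  rw [fLT_iff hP]
  refine ⟨?_, ?_⟩
  · rintro rfl
    exact fLT_asymm hP h h'
  · have := nn_add ((fLT_iff hP _ _).1 h).2 ((fLT_iff hP _ _).1 h').2
    simpa using this

theorem fLT_closure {n : ℕ} {P : Set (Fin n → ℝ)} (hP : IsSignedPoset n P) (k : ℕ) :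
    ∀ a b : Option (SIdx n), fLT P a b →
      (Finset.univ.filter (fun c => fLT P a c ∧ fLT P c b)).card < k →
      vO a - vO b ∈ AddSubmonoid.closure (covRoots P) := by
  induction k with
  | zero => intro a b _ h; omega
  | succ k ih =>
    intro a b hab hk
    by_cases hc : ∃ c, fLT P a c ∧ fLT P c b
    · obtain ⟨c, hac, hcb⟩ := hc
      have h1 := ih a c hac (by
        refine lt_of_lt_of_le (Finset.card_lt_card ?_) (Nat.lt_succ_iff.1 hk)
        refine Finset.ssubset_iff_subset_ne.2 ⟨fun x => ?_, fun h => ?_⟩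
        · simp only [Finset.mem_filter, Finset.mem_univ, true_and]
          exact fun hx => ⟨hx.1, fLT_trans hP hx.2 hcb⟩
        · have : c ∈ Finset.univ.filter (fun c => fLT P a c ∧ fLT P c b) := by simp [hac, hcb]
          rw [← h] at this
          simp only [Finset.mem_filter, Finset.mem_univ, true_and] at this
          exact fLT_asymm hP this.2 this.2)
      have h2 := ih c b hcb (by
        refine lt_of_lt_of_le (Finset.card_lt_card ?_) (Nat.lt_succ_iff.1 hk)
        refine Finset.ssubset_iff_subset_ne.2 ⟨fun x => ?_, fun h => ?_⟩
        · simp only [Finset.mem_filter, Finset.mem_univ, true_and]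
          exact fun hx => ⟨fLT_trans hP hac hx.1, hx.2⟩
        · have : c ∈ Finset.univ.filter (fun c => fLT P a c ∧ fLT P c b) := by simp [hac, hcb]
          rw [← h] at this
          simp only [Finset.mem_filter, Finset.mem_univ, true_and] at this
          exact fLT_asymm hP this.1 this.1)
      have := add_mem h1 h2
      simpa using this
    · exact AddSubmonoid.subset_closure ⟨a, b, ⟨hab, hc⟩, rfl⟩

theorem root_repr {n : ℕ} {α : Fin n → ℝ} (h : α ∈ BnRoots n) :
    ∃ a b : Option (SIdx n), α = vO a - vO b := by
  rcases h with ⟨i, j, _, s, t, rfl⟩ | ⟨i, s, rfl⟩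
  · exact ⟨some (s, i), some (!t, j), by simp [vO, vS, rsgn_not]⟩
  · exact ⟨some (s, i), none, by simp [vO, vS]⟩

theorem cov_mem {n : ℕ} {P : Set (Fin n → ℝ)} {a b : Option (SIdx n)}
    (h : CovPair P a b) : vO a - vO b ∈ P := by
  rcases h.1 with h1 | ⟨h1, rfl, h3⟩
  · exact h1
  · exact absurd ⟨none, Or.inl (by simpa [vO] using h3),
      Or.inl (by rw [vO_neg]; simpa [vO] using h3)⟩ h.2

theorem dotR_add_right {n : ℕ} (x y z : Fin n → ℝ) :
    dotR x (y + z) = dotR x y + dotR x z := by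
  simp [dotR, mul_add, Finset.sum_add_distrib]

theorem dotR_sub_sub {n : ℕ} (a b c d : Fin n → ℝ) :
    dotR (a - b) (c - d) = dotR a c + dotR a (-d) + dotR (-b) c + dotR (-b) (-d) := by
  simp only [dotR, ← Finset.sum_add_distrib]
  refine Finset.sum_congr rfl fun i _ => ?_
  simp only [Pi.sub_apply, Pi.neg_apply]
  ring

theorem eq_of_dot_pos {n : ℕ} {a c : Option (SIdx n)} (h : 0 < dotR (vO a) (vO c)) :
    c = a := by
  rcases a with _ | ⟨s, i⟩
  · simp [dotR, vO] at h
  · rcases c with _ | ⟨t, j⟩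
    · simp [dotR, vO] at h
    · by_cases hij : i = j
      · subst hij
        have : dotR (vO (some (s, i))) (vO (some (t, i))) = rsgn s * rsgn t := by
          simp [dotR, vO, vS, stdB, Pi.single_apply]
        rw [this] at h
        cases s <;> cases t <;> simp [rsgn] at h ⊢ <;> linarith
      · have : dotR (vO (some (s, i))) (vO (some (t, j))) = 0 := by
          simp [dotR, vO, vS, stdB, Pi.single_apply, hij, Ne.symm hij]
        exact absurd h (by rw [this]; simp)

theorem exists_dot_pos {n : ℕ} {S : Set (Fin n → ℝ)} (ρ : Fin n → ℝ) {x : Fin n → ℝ}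
    (hx : x ∈ AddSubmonoid.closure S) :
    0 < dotR ρ x → ∃ β ∈ S, 0 < dotR ρ β ∧ x - β ∈ AddSubmonoid.closure S := by
  induction hx using AddSubmonoid.closure_induction with
  | mem x hx => exact fun h => ⟨x, hx, h, by simp⟩
  | zero => intro h; simp [dotR] at h
  | add x y hx hy ihx ihy =>
    intro h
    rw [dotR_add_right] at h
    by_cases h1 : 0 < dotR ρ x
    · obtain ⟨β, h2, h3, h4⟩ := ihx h1
      exact ⟨β, h2, h3, by simpa [sub_add_eq_add_sub] using add_mem h4 hy⟩
    · obtain ⟨β, h2, h3, h4⟩ := ihy (by linarith)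
      exact ⟨β, h2, h3, by simpa [add_sub_assoc] using add_mem hx h4⟩

theorem cov_aux_left {n : ℕ} {P : Set (Fin n → ℝ)} (hP : IsSignedPoset n P)
    {a b d : Option (SIdx n)} (hab : CovPair P a b)
    (had : vO a - vO d ∈ P) (hne : vO a - vO d ≠ vO a - vO b)
    (hs : (vO a - vO b) - (vO a - vO d) ∈ nnSpan P) : False := by
  refine hab.2 ⟨d, Or.inl had, (fLT_iff hP _ _).2 ⟨?_, ?_⟩⟩
  · rintro rfl
    exact hne rfl
  · simpa using hs

theorem cov_aux_right {n : ℕ} {P : Set (Fin n → ℝ)} (hP : IsSignedPoset n P)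
    {a b c : Option (SIdx n)} (hab : CovPair P a b)
    (hcb : vO c - vO b ∈ P) (hne : vO c - vO b ≠ vO a - vO b)
    (hs : (vO a - vO b) - (vO c - vO b) ∈ nnSpan P) : False := by
  refine hab.2 ⟨c, (fLT_iff hP _ _).2 ⟨?_, ?_⟩, Or.inl hcb⟩
  · rintro rfl
    exact hne rfl
  · simpa using hs

theorem dotR_self_pos {n : ℕ} {x : Fin n → ℝ} (h : x ≠ 0) : 0 < dotR x x := by
  obtain ⟨i, hi⟩ := Function.ne_iff.1 h
  exact Finset.sum_pos' (fun i _ => mul_self_nonneg _) ⟨i, Finset.mem_univ _, by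
    exact mul_self_pos.2 hi⟩

theorem statement_10 (n : ℕ) (hn : 1 ≤ n) (P : Set (Fin n → ℝ)) (hP : IsSignedPoset n P) :
    (∀ a b : Option (SIdx n), CovPair P a b → vO a - vO b ∈ P) ∧
    (∀ α ∈ P, α ∈ AddSubmonoid.closure (covRoots P)) ∧
    AddSubmonoid.closure P = AddSubmonoid.closure (covRoots P) ∧
    ∀ a b : Option (SIdx n), CovPair P a b →
      vO a - vO b ∉ AddSubmonoid.closure (covRoots P \ {vO a - vO b}) := by
  have hcl : ∀ α ∈ P, α ∈ AddSubmonoid.closure (covRoots P) := by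
    intro α hα
    obtain ⟨a, b, rfl⟩ := root_repr (hP.1 hα)
    exact fLT_closure hP _ a b (Or.inl hα) (Nat.lt_succ_self _)
  have hsub : covRoots P ⊆ P := by
    rintro x ⟨a, b, h, rfl⟩
    exact cov_mem h
  refine ⟨fun a b h => cov_mem h, hcl,
    le_antisymm (AddSubmonoid.closure_le.2 hcl) (AddSubmonoid.closure_mono hsub), ?_⟩
  intro a b hab hmem
  have h0 : vO a - vO b ≠ 0 := by
    intro h
    have h1 := cov_mem hab
    rw [h] at h1
    exact hP.2.1 _ h1 (by simpa using h1)
  obtain ⟨β, ⟨hβ, hne⟩, hpos, hrest⟩ := exists_dot_pos _ hmem (dotR_self_pos h0)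
  have hrest' := nn_closure (S := P) (fun x hx => nn_of_mem (hsub hx.1)) hrest
  have hβP := hsub hβ
  obtain ⟨c, d, -, rfl⟩ := hβ
  replace hne : vO c - vO d ≠ vO a - vO b := hne
  have hswap : vO c - vO d = vO (negO d) - vO (negO c) := by
    rw [vO_neg, vO_neg]
    abel
  rw [dotR_sub_sub] at hpos
  by_cases h1 : 0 < dotR (vO a) (vO c)
  · rw [eq_of_dot_pos h1] at hβP hne hrest'
    exact cov_aux_left hP hab hβP hne hrest'
  by_cases h2 : 0 < dotR (vO a) (-vO d)
  · rw [← vO_neg] at h2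
    rw [hswap, eq_of_dot_pos h2] at hβP hne hrest'
    exact cov_aux_left hP hab hβP hne hrest'
  by_cases h3 : 0 < dotR (-vO b) (vO c)
  · rw [← vO_neg] at h3
    rw [hswap, eq_of_dot_pos h3, negO_negO] at hβP hne hrest'
    exact cov_aux_right hP hab hβP hne hrest'
  have h4 : 0 < dotR (-vO b) (-vO d) := by linarith
  rw [← vO_neg, ← vO_neg] at h4
  have h5 : d = b := by
    rw [← negO_negO d, eq_of_dot_pos h4, negO_negO]
  rw [h5] at hβP hne hrest'
  exact cov_aux_right hP hab hβP hne hrest'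
end
end

section
/- Let n ≥ 1 and let ≺ be an irreflexive, transitive relation on ±[n]. Then there exists a C_n-signed poset Q ⊆ Φ_{C_n} such that for all a, b ∈ ±[n] one has a ≺ b if and only if v(a) − v(b) ∈ Q, precisely when ≺ satisfies the following two conditions: (i) for all a, b ∈ ±[n], if a ≺ b then −b ≺ −a; and (ii) for all a, b ∈ ±[n], if a ≺ −a and b ≺ −b then a ≺ −b and b ≺ −a. -/
open scoped Classical

noncomputable section

theorem negS_negS {n : ℕ} (a : SIdx n) : negS (negS a) = a := by
  simp [negS]

theorem vS_negS {n : ℕ} (a : SIdx n) : vS (negS a) = - vS a := by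
  obtain ⟨s, i⟩ := a
  cases s <;> simp [vS, negS, rsgn]

theorem vS_inj {n : ℕ} {a b : SIdx n} (h : vS a = vS b) : a = b := by
  obtain ⟨s, i⟩ := a
  obtain ⟨t, j⟩ := b
  have h1 := congrFun h i
  by_cases hij : i = j
  · subst hij
    cases s <;> cases t <;> simp [vS, rsgn, stdB] at h1 ⊢ <;> linarith
  · exfalso
    cases s <;> cases t <;> simp [vS, rsgn, stdB, hij] at h1

theorem vS_sub_root {n : ℕ} {a b : SIdx n} (h : a ≠ b) : vS a - vS b ∈ CnRoots n := by
  obtain ⟨s, i⟩ := a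
  obtain ⟨t, j⟩ := b
  have hneg : ∀ t : Bool, rsgn (!t) = - rsgn t := by
    intro t; cases t <;> simp [rsgn]
  rcases lt_trichotomy i j with hij | hij | hij
  · left
    refine ⟨i, j, hij, s, !t, ?_⟩
    simp only [vS, hneg, neg_smul, sub_eq_add_neg]
  · right
    subst hij
    have hst : t = !s := by
      cases s <;> cases t <;> simp_all
    refine ⟨i, s, ?_⟩
    subst hst
    simp only [vS, hneg, ← sub_smul]
    congr 1
    ring
  · left
    refine ⟨j, i, hij, !t, s, ?_⟩
    simp only [vS, hneg, neg_smul]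
    abel

theorem root_eq_vS_sub {n : ℕ} {α : Fin n → ℝ} (h : α ∈ CnRoots n) :
    ∃ a b : SIdx n, a ≠ b ∧ α = vS a - vS b := by
  have hneg : ∀ t : Bool, rsgn (!t) = - rsgn t := by
    intro t; cases t <;> simp [rsgn]
  rcases h with ⟨i, j, hij, s, t, rfl⟩ | ⟨i, s, rfl⟩
  · refine ⟨(s, i), (!t, j), ?_, ?_⟩
    · intro h
      exact hij.ne (congrArg Prod.snd h)
    · simp only [vS, hneg, neg_smul, sub_neg_eq_add]
  · refine ⟨(s, i), (!s, i), ?_, ?_⟩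
    · simp
    · simp only [vS, hneg, ← sub_smul]
      congr 1
      ring

theorem dotR_vS {n : ℕ} (F : SIdx n → ℝ) (hF : ∀ c, F (negS c) = - F c) (c : SIdx n) :
    dotR (fun i => F (true, i)) (vS c) = F c := by
  obtain ⟨s, i⟩ := c
  have h1 : F (false, i) = - F (true, i) := hF (true, i)
  cases s
  · rw [h1]
    simp [dotR, vS, rsgn, stdB, Pi.single_apply]
  · simp [dotR, vS, rsgn, stdB, Pi.single_apply]

theorem sep_nonneg {n : ℕ} (prec : SIdx n → SIdx n → Prop) (F : SIdx n → ℝ)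
    (hF : ∀ c, F (negS c) = - F c) (hmono : ∀ c d, prec c d → F d ≤ F c)
    {a b : SIdx n}
    (h : vS a - vS b ∈ nnSpan {x | ∃ c d : SIdx n, prec c d ∧ x = vS c - vS d}) :
    F b ≤ F a := by
  have hsub : ∀ c d : SIdx n,
      dotR (fun i => F (true, i)) (vS c - vS d) = F c - F d := by
    intro c d
    rw [← dotR_vS F hF c, ← dotR_vS F hF d]
    simp [dotR, mul_sub, Finset.sum_sub_distrib]
  obtain ⟨r, c, β, hc, hβ, hx⟩ := h
  have h1 := hsub a b
  have h2 : dotR (fun i => F (true, i)) (∑ m, c m • β m)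
      = ∑ m, c m * dotR (fun i => F (true, i)) (β m) := by
    simp only [dotR, Finset.sum_apply, Pi.smul_apply, smul_eq_mul, Finset.mul_sum]
    rw [Finset.sum_comm]
    refine Finset.sum_congr rfl fun m _ => Finset.sum_congr rfl fun i _ => ?_
    ring
  rw [hx, h2] at h1
  have h3 : 0 ≤ ∑ m, c m * dotR (fun i => F (true, i)) (β m) := by
    refine Finset.sum_nonneg fun m _ => mul_nonneg (hc m) ?_
    obtain ⟨p, q, hpq, he⟩ := hβ m
    rw [he, hsub]
    linarith [hmono p q hpq]
  linarith

/-- The odd function attached to the principal down-set of `b`. -/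
def sepF {n : ℕ} (prec : SIdx n → SIdx n → Prop) (b c : SIdx n) : ℝ :=
  (if prec c b ∨ c = b then 1 else 0) - (if prec (negS c) b ∨ negS c = b then 1 else 0)

theorem sepF_le {n : ℕ} (prec : SIdx n → SIdx n → Prop)
    (htrans : ∀ a b c, prec a b → prec b c → prec a c)
    (hneg : ∀ a b : SIdx n, prec a b → prec (negS b) (negS a))
    (e : SIdx n) {a b : SIdx n}
    (h : vS a - vS b ∈ nnSpan {x | ∃ c d : SIdx n, prec c d ∧ x = vS c - vS d}) :
    sepF prec e b ≤ sepF prec e a := by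
  refine sep_nonneg prec (sepF prec e) ?_ ?_ h
  · intro c
    simp only [sepF, negS_negS]
    ring
  · have key : ∀ c d, prec c d → (prec d e ∨ d = e) → (prec c e ∨ c = e) := by
      rintro c d hcd (hd | rfl)
      · exact Or.inl (htrans _ _ _ hcd hd)
      · exact Or.inl hcd
    intro c d hcd
    have k1 := key _ _ hcd
    have k2 := key _ _ (hneg _ _ hcd)
    have ind : ∀ (p q : Prop) [Decidable p] [Decidable q], (p → q) →
        (if p then (1 : ℝ) else 0) ≤ (if q then (1 : ℝ) else 0) := by
      intro p q _ _ hpq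
      by_cases hp : p
      · simp [hp, hpq hp]
      · by_cases hq : q <;> simp [hp, hq]
    unfold sepF
    exact sub_le_sub (ind _ _ k1) (ind _ _ k2)

theorem span_closed {n : ℕ} (prec : SIdx n → SIdx n → Prop)
    (htrans : ∀ a b c, prec a b → prec b c → prec a c)
    (hneg : ∀ a b : SIdx n, prec a b → prec (negS b) (negS a))
    (hii : ∀ a b : SIdx n, prec a (negS a) → prec b (negS b) →
          prec a (negS b) ∧ prec b (negS a))
    {a b : SIdx n} (hab : a ≠ b)
    (h : vS a - vS b ∈ nnSpan {x | ∃ c d : SIdx n, prec c d ∧ x = vS c - vS d}) :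
    prec a b := by
  by_contra hnot
  have hne : ∀ c : SIdx n, negS c ≠ c := by
    rintro ⟨s, i⟩ h
    simp [negS] at h
  have hnab : negS b ≠ negS a := by
    intro h
    have := congrArg negS h
    rw [negS_negS, negS_negS] at this
    exact hab this.symm
  have hn2 : ¬ prec (negS b) (negS a) := by
    intro h
    have := hneg _ _ h
    rw [negS_negS, negS_negS] at this
    exact hnot this
  have s1 : prec (negS b) b := by
    by_contra hb
    have := sepF_le prec htrans hneg b h
    simp only [sepF, hnot, hab, hb, hne, or_self, or_true, if_true, if_false] at this
    split_ifs at this <;> norm_num at this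
  have s2 : prec a (negS a) := by
    by_contra ha
    have := sepF_le prec htrans hneg (negS a) h
    simp only [sepF, hn2, hnab, ha, (hne a).symm, or_self, or_true, if_true, if_false] at this
    split_ifs at this <;> norm_num at this
  have := (hii a (negS b) s2 (by rwa [negS_negS])).1
  rw [negS_negS] at this
  exact hnot this

theorem statement_11 (n : ℕ) (hn : 1 ≤ n) (prec : SIdx n → SIdx n → Prop)
    (hirr : ∀ a, ¬prec a a)
    (htrans : ∀ a b c, prec a b → prec b c → prec a c) :
    (∃ Q : Set (Fin n → ℝ), IsCnSignedPoset n Q ∧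
        ∀ a b : SIdx n, prec a b ↔ vS a - vS b ∈ Q) ↔
      ((∀ a b : SIdx n, prec a b → prec (negS b) (negS a)) ∧
        ∀ a b : SIdx n, prec a (negS a) → prec b (negS b) →
          prec a (negS b) ∧ prec b (negS a)) := by
  constructor
  · rintro ⟨Q, ⟨hsub, hanti, hcl⟩, hQ⟩
    refine ⟨?_, ?_⟩
    · intro a b h
      rw [hQ] at h ⊢
      have : vS (negS b) - vS (negS a) = vS a - vS b := by
        rw [vS_negS, vS_negS]; abel
      rwa [this]
    · have key : ∀ a b : SIdx n, prec a (negS a) → prec b (negS b) → prec a (negS b) := by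
        intro a b ha hb
        by_cases hab : a = negS b
        · exfalso
          have h2 := hb
          rw [← hab] at h2
          have h3 : b = negS a := by rw [hab, negS_negS]
          rw [← h3] at ha
          exact hirr _ (htrans _ _ _ ha h2)
        · rw [hQ] at ha hb ⊢
          refine hcl _ (vS_sub_root hab) ⟨2, fun _ => 1 / 2,
            ![vS a - vS (negS a), vS b - vS (negS b)], ?_, ?_, ?_⟩
          · intro m; norm_num
          · intro m
            fin_cases m
            · exact ha
            · exact hb
          · simp only [Fin.sum_univ_two, Matrix.cons_val_zero, Matrix.cons_val_one, vS_negS]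
            ext i
            simp
            ring
      exact fun a b ha hb => ⟨key a b ha hb, key b a hb ha⟩
  · rintro ⟨hneg, hii⟩
    have hself : ∀ Q : Set (Fin n → ℝ), ∀ x ∈ Q, x ∈ nnSpan Q := by
      intro Q x hx
      exact ⟨1, fun _ => 1, fun _ => x, by simp, by simpa using hx, by simp⟩
    have hpne : ∀ a b, prec a b → a ≠ b := by
      rintro a b h rfl
      exact hirr _ h
    have hiff : ∀ a b : SIdx n, prec a b ↔
        vS a - vS b ∈ {x | ∃ c d : SIdx n, prec c d ∧ x = vS c - vS d} := by
      intro a b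
      refine ⟨fun h => ⟨a, b, h, rfl⟩, fun h => ?_⟩
      refine span_closed prec htrans hneg hii ?_ (hself _ _ h)
      rintro rfl
      obtain ⟨c, d, hcd, he⟩ := h
      rw [sub_self] at he
      exact hpne _ _ hcd (vS_inj (sub_eq_zero.mp he.symm))
    refine ⟨{x | ∃ c d : SIdx n, prec c d ∧ x = vS c - vS d}, ⟨?_, ?_, ?_⟩, hiff⟩
    · rintro x ⟨c, d, hcd, rfl⟩
      exact vS_sub_root (hpne _ _ hcd)
    · rintro x ⟨c, d, hcd, rfl⟩ h
      rw [neg_sub] at h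
      exact hirr _ (htrans _ _ _ hcd ((hiff d c).mpr h))
    · intro α hα hs
      obtain ⟨a, b, hab, rfl⟩ := root_eq_vS_sub hα
      exact (hiff a b).mp (span_closed prec htrans hneg hii hab hs)
end
end
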